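/- Let a > 0 and 0 < α < 1. The second mixed problem ∂²ₜu − a²∂²ₓu = u^α on the closed quadrant [0,∞)×[0,∞) with zero initial conditions u(0,x) = 0, ∂ₜu(0,x) = 0 for x ≥ 0 and zero Neumann boundary condition ∂ₓu(t,0) = 0 for t ≥ 0 has infinitely many classical solutions. More precisely, the set of classical solutions contains the pairwise distinct family consisting of the trivial solution u ≡ 0 together with the functions u_{p;s}, s ≥ 0, where u_{p;s}(t,x) = 0 for 0 ≤ t < s and u_{p;s}(t,x) = ((1−α)²/(2(1+α)))^{1/(1−α)}·(t−s)^{2/(1−α)} for t ≥ s; in particular the map s ↦ u_{p;s} is injective on [0,∞), none of the u_{p;s} equals the zero function, and hence the classical solution of this problem is not unique. -/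

import Mathlib

open Set

/-- A classical solution of the second mixed problem
`∂ₜ²u − a²∂ₓ²u = uᵅ` on the closed quadrant `[0,∞) × [0,∞)` with zero initial
conditions `u(0,x) = 0`, `∂ₜu(0,x) = 0` and zero Neumann boundary condition
`∂ₓu(t,0) = 0`: a `C²` function on the quadrant (one-sided derivatives at the
boundary, i.e. derivatives within the quadrant) satisfying the equation and all
initial and boundary conditions pointwise.  Here `z ^ α` is the real power (rpow). -/
def IsClassicalSolution (a α : ℝ) (u : ℝ → ℝ → ℝ) : Prop :=
  ContDiffOn ℝ 2 (fun p : ℝ × ℝ => u p.1 p.2) (Ici 0 ×ˢ Ici 0) ∧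
  (∀ t ∈ Ici (0:ℝ), ∀ x ∈ Ici (0:ℝ),
    derivWithin (fun τ => derivWithin (fun σ => u σ x) (Ici 0) τ) (Ici 0) t
      - a ^ 2 * derivWithin (fun ξ => derivWithin (fun η => u t η) (Ici 0) ξ) (Ici 0) x
      = (u t x) ^ α) ∧
  (∀ x ∈ Ici (0:ℝ), u 0 x = 0) ∧
  (∀ x ∈ Ici (0:ℝ), derivWithin (fun τ => u τ x) (Ici 0) 0 = 0) ∧
  (∀ t ∈ Ici (0:ℝ), derivWithin (fun ξ => u t ξ) (Ici 0) 0 = 0)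

/-- The glued self-similar solution with delay parameter `s`: zero for `t < s` and
`((1−α)²/(2(1+α)))^{1/(1−α)}·(t−s)^{2/(1−α)}` for `t ≥ s`. -/
noncomputable def uPGlued (α s : ℝ) : ℝ → ℝ → ℝ :=
  fun t _x =>
    if t < s then 0
    else ((1 - α) ^ 2 / (2 * (1 + α))) ^ (1 / (1 - α)) * (t - s) ^ (2 / (1 - α))

/-- Positive part power. -/
noncomputable def ppow (s b t : ℝ) : ℝ := (max (t - s) 0) ^ b

lemma ppow_continuous (s b : ℝ) (hb : 0 < b) : Continuous (ppow s b) := by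
  unfold ppow
  exact Continuous.rpow_const (by fun_prop) (fun _ => Or.inr hb.le)

lemma ppow_hasDerivAt (s b : ℝ) (hb : 1 < b) (t : ℝ) :
    HasDerivAt (ppow s b) (b * ppow s (b - 1) t) t := by
  have key : ∀ y, y ≠ s → HasDerivAt (ppow s b) (b * ppow s (b - 1) y) y := by
    intro y hy
    rcases lt_or_gt_of_ne hy with h | h
    · have h0 : b * ppow s (b - 1) y = 0 := by
        unfold ppow
        rw [max_eq_right (by linarith), Real.zero_rpow (by linarith), mul_zero]
      rw [h0]
      refine (hasDerivAt_const y (0:ℝ)).congr_of_eventuallyEq ?_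
      filter_upwards [Iio_mem_nhds h] with z hz
      have hz' : z < s := hz
      unfold ppow
      rw [max_eq_right (by linarith), Real.zero_rpow (by linarith)]
    · have h1 : HasDerivAt (fun z : ℝ => (z - s) ^ b) (1 * b * (y - s) ^ (b - 1)) y :=
        ((hasDerivAt_id y).sub_const s).rpow_const (Or.inr hb.le)
      have h0 : b * ppow s (b - 1) y = 1 * b * (y - s) ^ (b - 1) := by
        unfold ppow
        rw [max_eq_left (by linarith), one_mul]
      rw [h0]
      refine h1.congr_of_eventuallyEq ?_
      filter_upwards [Ioi_mem_nhds h] with z hz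
      have hz' : s < z := hz
      unfold ppow
      rw [max_eq_left (by linarith)]
  by_cases ht : t = s
  · subst ht
    exact hasDerivAt_of_hasDerivAt_of_ne key
      (ppow_continuous t b (by linarith)).continuousAt
      (continuous_const.mul (ppow_continuous t (b - 1) (by linarith))).continuousAt
  · exact key t ht

lemma ppow_contDiff (s b : ℝ) (hb : 2 < b) : ContDiff ℝ 2 (ppow s b) := by
  have d1 : deriv (ppow s b) = fun t => b * ppow s (b - 1) t :=
    funext fun t => (ppow_hasDerivAt s b (by linarith) t).deriv
  have d2 : deriv (ppow s (b - 1)) = fun t => (b - 1) * ppow s (b - 1 - 1) t :=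
    funext fun t => (ppow_hasDerivAt s (b - 1) (by linarith) t).deriv
  have c1 : ContDiff ℝ 1 (ppow s (b - 1)) := by
    rw [contDiff_one_iff_deriv]
    refine ⟨fun t => (ppow_hasDerivAt s (b - 1) (by linarith) t).differentiableAt, ?_⟩
    rw [d2]
    exact continuous_const.mul (ppow_continuous s _ (by linarith))
  rw [show (2 : WithTop ℕ∞) = 1 + 1 by norm_num, contDiff_succ_iff_deriv]
  refine ⟨fun t => (ppow_hasDerivAt s b (by linarith) t).differentiableAt, by simp, ?_⟩
  rw [d1]
  exact contDiff_const.mul c1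

lemma uPGlued_eq (α s : ℝ) (h2 : α < 1) : uPGlued α s = fun t _ =>
    ((1 - α) ^ 2 / (2 * (1 + α))) ^ (1 / (1 - α)) * ppow s (2 / (1 - α)) t := by
  have h : 0 < 2 / (1 - α) := div_pos two_pos (by linarith)
  funext t x
  unfold uPGlued ppow
  split_ifs with hts
  · rw [max_eq_right (by linarith), Real.zero_rpow h.ne', mul_zero]
  · rw [max_eq_left (by linarith)]

lemma uPGlued_pos (α s t x : ℝ) (h1 : 0 < α) (h2 : α < 1) (h : s < t) :
    0 < uPGlued α s t x := by
  unfold uPGlued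
  rw [if_neg (by linarith)]
  have e1 : 0 < 1 - α := by linarith
  have e2 : 0 < t - s := by linarith
  positivity

lemma uPGlued_self (α s t x : ℝ) (h2 : α < 1) (h : t ≤ s) :
    uPGlued α s t x = 0 := by
  have hb : 0 < 2 / (1 - α) := div_pos two_pos (by linarith)
  rw [uPGlued_eq α s h2]
  simp only [ppow]
  rw [max_eq_right (by linarith), Real.zero_rpow hb.ne', mul_zero]

lemma uPGlued_sol (a α s : ℝ) (h1 : 0 < α) (h2 : α < 1) (hs : 0 ≤ s) :
    IsClassicalSolution a α (uPGlued α s) := by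
  have e1 : 0 < 1 - α := by linarith
  have hzero : ∀ x, uPGlued α s 0 x = 0 := fun x => uPGlued_self α s 0 x h2 hs
  rw [uPGlued_eq α s h2] at *
  set K : ℝ := (1 - α) ^ 2 / (2 * (1 + α)) with hK
  set c : ℝ := K ^ (1 / (1 - α)) with hc
  set b : ℝ := 2 / (1 - α) with hb
  have hKpos : 0 < K := by positivity
  have hcpos : 0 < c := by positivity
  have hb2 : 2 < b := by rw [hb, lt_div_iff₀ e1]; linarith
  have D1 : ∀ t ∈ Ici (0:ℝ), derivWithin (fun σ => c * ppow s b σ) (Ici 0) t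
      = c * (b * ppow s (b - 1) t) := fun t ht =>
    ((ppow_hasDerivAt s b (by linarith) t).const_mul c).hasDerivWithinAt.derivWithin
      (uniqueDiffOn_Ici 0 t ht)
  have D2 : ∀ t ∈ Ici (0:ℝ), derivWithin (fun τ => derivWithin (fun σ => c * ppow s b σ)
      (Ici 0) τ) (Ici 0) t = c * (b * ((b - 1) * ppow s (b - 1 - 1) t)) := by
    intro t ht
    rw [derivWithin_congr D1 (D1 t ht)]
    exact (((ppow_hasDerivAt s (b - 1) (by linarith) t).const_mul b).const_mul c
      ).hasDerivWithinAt.derivWithin (uniqueDiffOn_Ici 0 t ht)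
  refine ⟨?_, ?_, fun x _ => hzero x, ?_, ?_⟩
  · exact (contDiff_const.mul ((ppow_contDiff s b hb2).comp contDiff_fst)).contDiffOn
  · intro t ht x hx
    simp only []
    rw [D2 t ht]
    have hp : 0 ≤ ppow s b t := Real.rpow_nonneg (le_max_right _ _) _
    have hcα : c ^ α = c * (b * (b - 1)) := by
      have hcK : c = K ^ (α / (1 - α)) * K := by
        rw [hc, ← Real.rpow_add_one hKpos.ne']
        congr 1
        field_simp
        ring
      have hKb : K * (b * (b - 1)) = 1 := by
        rw [hK, hb]
        field_simp
        ring
      have : c ^ α = K ^ (α / (1 - α)) := by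
        rw [hc, ← Real.rpow_mul hKpos.le]
        congr 1
        field_simp
      rw [this, hcK, mul_assoc, hKb, mul_one]
    have hpα : ppow s b t ^ α = ppow s (b - 1 - 1) t := by
      unfold ppow
      rw [← Real.rpow_mul (le_max_right _ _)]
      congr 1
      rw [hb]
      field_simp
      ring
    rw [Real.mul_rpow hcpos.le hp, hcα, hpα]
    simp
    ring
  · intro x hx
    simp only []
    rw [D1 0 self_mem_Ici]
    unfold ppow
    rw [max_eq_right (by linarith), Real.zero_rpow (by linarith)]
    simp
  · intro t ht
    simp

/-- **Non-uniqueness of the classical solution.** For `a > 0` and `0 < α < 1`, the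
second mixed problem `∂ₜ²u − a²∂ₓ²u = uᵅ` on `[0,∞) × [0,∞)` with zero initial data
and zero Neumann boundary condition has infinitely many classical solutions: the set
of classical solutions is infinite; the trivial solution `u ≡ 0` is a classical
solution; every glued function `u_{p;s}`, `s ≥ 0`, is a classical solution; the map
`s ↦ u_{p;s}` is injective on `[0,∞)` (even as functions on the closed quadrant);
none of the `u_{p;s}` vanishes identically on the quadrant; and hence the classical
solution of the problem is not unique. -/
theorem classical_solution_not_unique
    (a α : ℝ) (ha : 0 < a) (hα1 : 0 < α) (hα2 : α < 1) :
    {u : ℝ → ℝ → ℝ | IsClassicalSolution a α u}.Infinite ∧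
    IsClassicalSolution a α (fun _ _ => 0) ∧
    (∀ s ∈ Ici (0:ℝ), IsClassicalSolution a α (uPGlued α s)) ∧
    (∀ s₁ ∈ Ici (0:ℝ), ∀ s₂ ∈ Ici (0:ℝ),
      (∀ t ∈ Ici (0:ℝ), ∀ x ∈ Ici (0:ℝ), uPGlued α s₁ t x = uPGlued α s₂ t x) →
        s₁ = s₂) ∧
    (∀ s ∈ Ici (0:ℝ), ¬ ∀ t ∈ Ici (0:ℝ), ∀ x ∈ Ici (0:ℝ), uPGlued α s t x = 0) ∧
    ∃ u v : ℝ → ℝ → ℝ, IsClassicalSolution a α u ∧ IsClassicalSolution a α v ∧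
      ∃ t ∈ Ici (0:ℝ), ∃ x ∈ Ici (0:ℝ), u t x ≠ v t x := by
  have hzero : IsClassicalSolution a α (fun _ _ => 0) := by
    refine ⟨contDiffOn_const, ?_, ?_, ?_, ?_⟩ <;> simp [Real.zero_rpow hα1.ne']
  have hsol : ∀ s ∈ Ici (0:ℝ), IsClassicalSolution a α (uPGlued α s) :=
    fun s hs => uPGlued_sol a α s hα1 hα2 hs
  have hinj : ∀ s₁ ∈ Ici (0:ℝ), ∀ s₂ ∈ Ici (0:ℝ),
      (∀ t ∈ Ici (0:ℝ), ∀ x ∈ Ici (0:ℝ), uPGlued α s₁ t x = uPGlued α s₂ t x) →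
        s₁ = s₂ := by
    intro s₁ h₁ s₂ h₂ h
    rcases lt_trichotomy s₁ s₂ with hlt | heq | hlt
    · have e := h s₂ h₂ 0 self_mem_Ici
      rw [uPGlued_self α s₂ s₂ 0 hα2 le_rfl] at e
      exact absurd e (uPGlued_pos α s₁ s₂ 0 hα1 hα2 hlt).ne'
    · exact heq
    · have e := h s₁ h₁ 0 self_mem_Ici
      rw [uPGlued_self α s₁ s₁ 0 hα2 le_rfl] at e
      exact absurd e.symm (uPGlued_pos α s₂ s₁ 0 hα1 hα2 hlt).ne'
  refine ⟨?_, hzero, hsol, hinj, ?_, ?_⟩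
  · refine (Set.Ici_infinite (0:ℝ)).image (f := uPGlued α) ?_ |>.mono ?_
    · intro s₁ h₁ s₂ h₂ h
      exact hinj s₁ h₁ s₂ h₂ (fun t _ x _ => by rw [h])
    · rintro _ ⟨s, hs, rfl⟩
      exact hsol s hs
  · intro s hs h
    have hs' : (0:ℝ) ≤ s := hs
    exact (uPGlued_pos α s (s + 1) 0 hα1 hα2 (by linarith)).ne'
      (h (s + 1) (show (0:ℝ) ≤ s + 1 by linarith) 0 self_mem_Ici)
  · exact ⟨uPGlued α 0, fun _ _ => 0, hsol 0 self_mem_Ici, hzero, 1,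
      show (0:ℝ) ≤ 1 by norm_num, 0, self_mem_Ici,
      (uPGlued_pos α 0 1 0 hα1 hα2 one_pos).ne'⟩
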